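/- Let p be a prime, let κ be a cardinal with κ > ℶ_{2p−1} (the (2p−1)-st beth number), let V_κ = ⊕_κ ℤ/pℤ, and let H be an arbitrary abelian group. If f : V_κ^# → H^# is a continuous map, then there exists an infinite S ⊆ κ such that f is linear on [S]^p, where [S]^p denotes the set of elements Σ_{α∈s} e_α of V_κ for p-element subsets s of S. -/

import Mathlib

open scoped Pointwise

/-- The Bohr topology on an abelian group `G`: the initial topology induced by the
family of all group homomorphisms from `G` to the circle group `ℝ/ℤ`. -/
noncomputable def bohrTopology (G : Type*) [AddCommGroup G] : TopologicalSpace G :=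
  ⨅ χ : G →+ AddCircle (1 : ℝ), TopologicalSpace.induced χ inferInstance

/-- The set `[S]^n` inside `⊕_κ ℤ/pℤ`: sums `Σ_{α ∈ s} e_α` over `n`-element subsets
`s` of `S`. -/
def basisSums (p : ℕ) {κ : Type*} (S : Set κ) (n : ℕ) : Set (κ →₀ ZMod p) :=
  {x | x.support.card = n ∧ (∀ i ∈ x.support, x i = 1) ∧ ↑x.support ⊆ S}

/-!
Embed `H` into a direct sum `⊕_I Q` of copies of the countable group `Q = ℚ × ℚ/ℤ` and let `F A` be
the image of `f (∑_{a ∈ A} e_a) - f 0`. The list of nonzero values of `F A` colors the finite sets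
with countably many colors, so the Erdős–Rado theorem gives an infinite set of indices, which we
identify with `ℕ`, such that all `2p`-element sets `A` have the same list; only the places
`ξ k A ∈ I` at which the values sit depend on `A`. By a further application of Ramsey's theorem, in
the style of the Erdős–Rado canonization theorem, whether `ξ k A = ξ l B` depends only on the
relative position of `A` and `B`; in particular `ξ k A` determines, and is determined by, the
elements of `A` in certain essential positions.

Continuity enters in the following form: given a character of `⊕_I Q`, there is a finite coloring
such that enlarging a set by elements which contain each color a multiple of `p` times hardly
changes the character on `F`. Testing this with characters built from the Rado graph shows that each
`ξ k` has exactly one essential position. Hence `F A` is a sum of contributions `h j x` of the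
single elements `x` of `A`, depending on their positions `j`. Further characters show that, for all
large `x`, the `p`-fold sums `∑_{j ∈ J} h j x` vanish, so that `h j x` is independent of `j` and is
annihilated by `p`; here it matters that there are more than `p` positions. Finally, discarding `p`
elements of a `2p`-element set, again by continuity, gives the same formula on `p`-element sets.
-/

universe u

section Partition

variable {W K C : Type*}

/-- `S` is homogeneous for the coloring `c` in exponent `n`: all `n`-element subsets of `S`
have the same color. -/
def IsHomogeneous (c : Finset K → C) (n : ℕ) (S : Set K) : Prop :=
  ∃ γ, ∀ a : Finset K, a.card = n → ↑a ⊆ S → c a = γ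

/-- The injective sequence `x` is end-homogeneous for `c`: the color of a finite set of entries
is determined, through `c'`, by what is left of it when its last entry is removed. -/
def IsEndHomogeneous [LinearOrder W] [DecidableEq K] (c c' : Finset K → C) (x : W → K) : Prop :=
  ∀ ξ, x ξ ∉ x '' Set.Iio ξ ∧ ∀ a : Finset K, ↑a ⊆ x '' Set.Iio ξ → c (insert (x ξ) a) = c' a

theorem isHomogeneous_zero (c : Finset K → C) (S : Set K) : IsHomogeneous c 0 S :=
  ⟨c ∅, fun a ha _ ↦ by rw [Finset.card_eq_zero.mp ha]⟩

theorem exists_infinite_isHomogeneous_one [Uncountable K] [Countable C] (c : Finset K → C) :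
    ∃ S : Set K, S.Infinite ∧ IsHomogeneous c 1 S := by
  obtain ⟨γ, hγ⟩ : ∃ γ, ((fun k ↦ c {k}) ⁻¹' {γ}).Infinite := by
    by_contra! hfin
    refine Set.not_countable_univ (α := K) ?_
    rw [← Set.preimage_univ (f := fun k ↦ c {k}), ← Set.iUnion_of_singleton, Set.preimage_iUnion]
    exact Set.countable_iUnion fun γ ↦ (hfin γ).countable
  refine ⟨_, hγ, γ, fun a ha haS ↦ ?_⟩
  obtain ⟨k, rfl⟩ := Finset.card_eq_one.mp ha
  exact haS (Finset.mem_coe.mpr (Finset.mem_singleton_self k))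

theorem exists_eq_apply_image_Iio [LinearOrder W] [WellFoundedLT W] (g : Set K → K) :
    ∃ x : W → K, ∀ ξ, x ξ = g (x '' Set.Iio ξ) := by
  refine ⟨wellFounded_lt.fix fun ξ ih ↦ g (Set.range fun η : Set.Iio ξ ↦ ih η.1 η.2), fun ξ ↦ ?_⟩
  rw [wellFounded_lt.fix_eq, Set.image_eq_range]

namespace IsEndHomogeneous

variable [LinearOrder W] [DecidableEq K] {c c' : Finset K → C} {x : W → K}

theorem injective (h : IsEndHomogeneous c c' x) : Function.Injective x :=
  .of_lt_imp_ne fun η ξ hlt heq ↦ (h ξ).1 ⟨η, hlt, heq⟩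

theorem exists_infinite_isHomogeneous (h : IsEndHomogeneous c c' x) {n : ℕ} {S : Set W}
    (hS : S.Infinite) (hhom : IsHomogeneous (fun a ↦ c' (a.image x)) n S) :
    ∃ T : Set K, T.Infinite ∧ IsHomogeneous c (n + 1) T := by
  obtain ⟨γ, hγ⟩ := hhom
  refine ⟨x '' S, hS.image h.injective.injOn, γ, fun b hb hbS ↦ ?_⟩
  obtain ⟨a, haS, rfl⟩ := Finset.subset_set_image_iff.mp hbS
  rw [Finset.card_image_of_injective _ h.injective] at hb
  have hne : a.Nonempty := Finset.card_pos.mp (by lia)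
  have hmax := a.max'_mem hne
  rw [← Finset.insert_erase hmax, Finset.image_insert, (h _).2]
  · refine hγ _ (by rw [Finset.card_erase_of_mem hmax, hb, Nat.add_sub_cancel]) ?_
    exact fun y hy ↦ haS (Finset.mem_of_mem_erase hy)
  · rw [Finset.coe_image]
    exact Set.image_mono fun y hy ↦ Finset.lt_max'_of_mem_erase_max' a hne hy

end IsEndHomogeneous

theorem exists_isEndHomogeneous_nat [Finite C] (c : Finset ℕ → C) :
    ∃ (c' : Finset ℕ → C) (x : ℕ → ℕ), IsEndHomogeneous c c' x := by
  have hlim (a : Finset ℕ) : ∃ γ, ∀ᶠ z in (Filter.hyperfilter ℕ : Filter ℕ), c (insert z a) = γ :=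
    Ultrafilter.eventually_exists_iff.mp (.of_forall fun z ↦ ⟨_, rfl⟩)
  choose c' hc' using hlim
  have hnext (X : Set ℕ) : ∃ z, X.Finite →
      z ∉ X ∧ ∀ a : Finset ℕ, ↑a ⊆ X → c (insert z a) = c' a := by
    by_cases hX : X.Finite
    · have hfin : {a : Finset ℕ | ↑a ⊆ X}.Finite :=
        hX.finite_subsets.preimage Finset.coe_injective.injOn
      have hnotMem : ∀ᶠ z in (Filter.hyperfilter ℕ : Filter ℕ), z ∉ X :=
        hX.compl_mem_hyperfilter
      have hcol := (Filter.eventually_all_finite hfin).mpr fun a _ ↦ hc' a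
      obtain ⟨z, hz⟩ := (hnotMem.and hcol).exists
      exact ⟨z, fun _ ↦ hz⟩
    · exact ⟨0, fun h ↦ absurd h hX⟩
  choose g hg using hnext
  obtain ⟨x, hx⟩ := exists_eq_apply_image_Iio (W := ℕ) g
  refine ⟨c', x, fun ξ ↦ ?_⟩
  rw [hx ξ]
  exact hg _ ((Set.finite_Iio ξ).image x)

theorem exists_infinite_isHomogeneous_nat [Finite C] (n : ℕ) (c : Finset ℕ → C) :
    ∃ S : Set ℕ, S.Infinite ∧ IsHomogeneous c n S := by
  induction n generalizing c with
  | zero => exact ⟨Set.univ, Set.infinite_univ, isHomogeneous_zero c _⟩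
  | succ n ih =>
    obtain ⟨c', x, hx⟩ := exists_isEndHomogeneous_nat c
    obtain ⟨S, hS, hhom⟩ := ih fun a ↦ c' (a.image x)
    exact hx.exists_infinite_isHomogeneous hS hhom

section Branch

variable [DecidableEq K]

/-- Some point outside `X` which, over finite subsets of `X`, has the same colors as `y`.
The value is junk when there is no such point; there is one when `y ∉ X`, namely `y`. -/
noncomputable def mimic (c : Finset K → C) (y : K) (X : Set K) : K :=
  haveI : Nonempty K := ⟨y⟩
  Classical.epsilon fun z ↦ z ∉ X ∧ ∀ a : Finset K, ↑a ⊆ X → c (insert z a) = c (insert y a)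

theorem mimic_spec (c : Finset K → C) {y : K} {X : Set K} (hy : y ∉ X) :
    mimic c y X ∉ X ∧
      ∀ a : Finset K, ↑a ⊆ X → c (insert (mimic c y X) a) = c (insert y a) :=
  Classical.epsilon_spec (p := fun z ↦ z ∉ X ∧
    ∀ a : Finset K, (a : Set K) ⊆ X → c (insert z a) = c (insert y a)) ⟨y, hy, fun _ _ ↦ rfl⟩

theorem mimic_congr {c : Finset K → C} {y z : K} {X : Set K}
    (h : ∀ a : Finset K, ↑a ⊆ X → c (insert y a) = c (insert z a)) :
    mimic c y X = mimic c z X := by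
  unfold mimic
  congr 1
  ext w
  refine and_congr_right fun _ ↦ forall₂_congr fun a ha ↦ ?_
  rw [h a ha]

variable [LinearOrder W] [WellFoundedLT W]

/-- The branch of `y` in the tree of color profiles: its entries successively mimic `y` over
the preceding entries, until one of them is `y` itself and the rest is junk. -/
noncomputable def branch (c : Finset K → C) (y : K) : W → K :=
  (exists_eq_apply_image_Iio (mimic c y)).choose

theorem branch_apply (c : Finset K → C) (y : K) (ξ : W) :
    branch c y ξ = mimic c y (branch c y '' Set.Iio ξ) :=
  (exists_eq_apply_image_Iio (mimic c y)).choose_spec ξ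

/-- The colors that `y` has over the entries of its branch which precede `ξ`. -/
noncomputable def branchProfile (c : Finset K → C) (y : K) (ξ : W) : Finset (Set.Iio ξ) → C :=
  fun a ↦ c (insert y ((a.image Subtype.val).image (branch c y)))

theorem branch_eq_of_branchProfile_eq {c : Finset K → C} {y z : K} {ξ : W}
    (h : branchProfile c y ξ = branchProfile c z ξ) : branch c y ξ = branch c z ξ := by
  suffices ∀ η ≤ ξ, branch c y η = branch c z η from this ξ le_rfl
  intro η
  induction η using WellFoundedLT.induction with
  | ind η ih =>
    intro hη
    have himage : branch c y '' Set.Iio η = branch c z '' Set.Iio η :=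
      Set.image_congr fun ζ hζ ↦ ih ζ hζ (hζ.le.trans hη)
    rw [branch_apply c y, branch_apply c z, ← himage]
    refine mimic_congr fun a ha ↦ ?_
    obtain ⟨b, hb, rfl⟩ := Finset.subset_set_image_iff.mp ha
    have hbξ : ∀ ζ ∈ b, ζ ∈ Set.Iio ξ := fun ζ hζ ↦ (hb hζ).trans_le hη
    have hbz : b.image (branch c y) = b.image (branch c z) :=
      Finset.image_congr fun ζ hζ ↦ ih ζ (hb hζ) ((hb hζ).le.trans hη)
    lift b to Finset (Set.Iio ξ) using hbξ
    exact (congrFun h b).trans (by rw [branchProfile, hbz])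

theorem exists_forall_branch_ne (c : Finset K → C)
    (hK : IsEmpty (K ↪ Σ ξ : W, Finset (Set.Iio ξ) → C)) : ∃ y, ∀ ξ : W, branch c y ξ ≠ y := by
  by_contra! hon
  choose ξ hξ using hon
  have hprofile (y z : K) (ζ θ : W)
      (h : (⟨ζ, branchProfile c y ζ⟩ : Σ ξ : W, Finset (Set.Iio ξ) → C) =
        ⟨θ, branchProfile c z θ⟩) : branch c y ζ = branch c z θ := by
    obtain rfl : ζ = θ := congrArg Sigma.fst h
    exact branch_eq_of_branchProfile_eq (eq_of_heq (Sigma.mk.inj h).2)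
  refine hK.false ⟨fun y ↦ ⟨ξ y, branchProfile c y (ξ y)⟩, fun y z h ↦ ?_⟩
  rw [← hξ y, ← hξ z, hprofile y z _ _ h]

theorem exists_isEndHomogeneous_of_isEmpty_embedding (c : Finset K → C)
    (hK : IsEmpty (K ↪ Σ ξ : W, Finset (Set.Iio ξ) → C)) :
    ∃ (c' : Finset K → C) (x : W → K), IsEndHomogeneous c c' x := by
  obtain ⟨y, hy⟩ := exists_forall_branch_ne c hK
  refine ⟨fun a ↦ c (insert y a), branch c y, fun ξ ↦ ?_⟩
  rw [branch_apply c y ξ]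
  refine mimic_spec c ?_
  rintro ⟨η, -, hη⟩
  exact hy η hη

end Branch

open Cardinal in
theorem mk_sigma_finset_Iio_le {l : Cardinal.{u}} (hl : ℵ₀ ≤ l) :
    #(Σ ξ : (Order.succ l).ord.ToType, Finset (Set.Iio ξ) → ℕ) ≤ 2 ^ l := by
  have hfiber (ξ : (Order.succ l).ord.ToType) : #(Finset (Set.Iio ξ) → ℕ) ≤ 2 ^ l := by
    have hIio : #(Finset (Set.Iio ξ)) ≤ l := by
      have hlt : #(Set.Iio ξ) < #(Order.succ l).ord.ToType := mk_Iio_lt ξ (by simp)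
      rw [mk_ord_toType, Order.lt_succ_iff] at hlt
      rcases finite_or_infinite (Set.Iio ξ) with _ | _
      · exact mk_lt_aleph0.le.trans hl
      · rwa [mk_finset_of_infinite]
    calc #(Finset (Set.Iio ξ) → ℕ) = ℵ₀ ^ #(Finset (Set.Iio ξ)) := by simp
      _ ≤ ℵ₀ ^ l := power_le_power_left aleph0_ne_zero hIio
      _ = 2 ^ l := power_eq_two_power hl (natCast_le_aleph0 (n := 2)) hl
  calc #(Σ ξ : (Order.succ l).ord.ToType, Finset (Set.Iio ξ) → ℕ)
      ≤ Cardinal.sum fun _ : (Order.succ l).ord.ToType ↦ (2 ^ l : Cardinal.{u}) := by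
        rw [mk_sigma]
        exact sum_le_sum _ _ hfiber
    _ = Order.succ l * 2 ^ l := by simp
    _ ≤ 2 ^ l * 2 ^ l := by gcongr; exact Order.succ_le_of_lt (cantor l)
    _ = 2 ^ l := by rw [← power_add, add_eq_self hl]

theorem exists_infinite_isHomogeneous_of_beth_lt [Countable C] (n : ℕ) (K : Type u)
    (hK : Cardinal.beth (n : Ordinal.{u}) < Cardinal.mk K) (c : Finset K → C) :
    ∃ S : Set K, S.Infinite ∧ IsHomogeneous c (n + 1) S := by
  classical
  induction n generalizing K with
  | zero =>
    rw [Nat.cast_zero, Cardinal.beth_zero, Cardinal.aleph0_lt_mk_iff] at hK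
    exact exists_infinite_isHomogeneous_one c
  | succ n ih =>
    rw [Nat.cast_succ, Cardinal.beth_add_one] at hK
    obtain ⟨e, he⟩ := Countable.exists_injective_nat C
    have hsmall := (mk_sigma_finset_Iio_le (Cardinal.aleph0_le_beth n)).trans_lt hK
    obtain ⟨c', x, hx⟩ := exists_isEndHomogeneous_of_isEmpty_embedding
      (W := (Order.succ (Cardinal.beth n)).ord.ToType) c <| by
        refine not_nonempty_iff.mp fun ⟨f⟩ ↦ hsmall.not_ge ?_
        exact ⟨f.trans (.sigmaMap (.refl _) fun _ ↦ .arrowCongrRight ⟨e, he⟩)⟩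
    obtain ⟨S, hS, hhom⟩ := ih (Order.succ (Cardinal.beth n)).ord.ToType
      (by rw [Cardinal.mk_ord_toType]; exact Order.lt_succ _) fun a ↦ c' (a.image x)
    exact hx.exists_infinite_isHomogeneous hS hhom

end Partition

section DivisibleEmbedding

open Submodule

theorem exists_rat_prod_addCircle_addOrderOf_eq (n : ℕ) :
    ∃ q : ℚ × AddCircle (1 : ℚ), addOrderOf q = n := by
  rcases n.eq_zero_or_pos with rfl | hn
  · refine ⟨(1, 0), ?_⟩
    rw [Prod.addOrderOf_mk, addOrderOf_eq_zero_iff'.mpr, Nat.lcm_zero_left]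
    intro n hn
    rwa [nsmul_one, Nat.cast_ne_zero, ← Nat.pos_iff_ne_zero]
  · have : Fact ((0 : ℚ) < 1) := ⟨one_pos⟩
    refine ⟨(0, (1 / n : ℚ)), ?_⟩
    rw [Prod.addOrderOf_mk, addOrderOf_zero, Nat.lcm_one_left, AddCircle.addOrderOf_period_div hn]

theorem exists_injective_span_singleton {H : Type*} [AddCommGroup H] (a : H) :
    ∃ g : (ℤ ∙ a) →ₗ[ℤ] ℚ × AddCircle (1 : ℚ), Function.Injective g := by
  obtain ⟨q, hq⟩ := exists_rat_prod_addCircle_addOrderOf_eq (addOrderOf a)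
  have e : (ℤ ∙ a) ≃ₗ[ℤ] ℤ ∙ q := CharacterModule.intSpanEquivQuotAddOrderOf a ≪≫ₗ
    quotEquivOfEq _ _ (by rw [hq]) ≪≫ₗ (CharacterModule.intSpanEquivQuotAddOrderOf q).symm
  exact ⟨(ℤ ∙ q).subtype ∘ₗ e, Subtype.val_injective.comp e.injective⟩

theorem sSupIndep_insert {α : Type*} [CompleteLattice α] [IsModularLattice α] {s : Set α} {a : α}
    (hs : sSupIndep s) (ha : Disjoint a (sSup s)) : sSupIndep (insert a s) := by
  rintro b (rfl | hb)
  · refine ha.mono_right (sSup_le_sSup ?_)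
    rintro c ⟨rfl | hc, hne⟩
    · exact absurd rfl hne
    · exact hc
  · have hle : sSup (insert a s \ {b}) ≤ sSup (s \ {b}) ⊔ a := by
      refine sSup_le ?_
      rintro c ⟨rfl | hc, hne⟩
      · exact le_sup_right
      · exact le_sup_of_le_left (le_sSup ⟨hc, hne⟩)
    refine (Disjoint.disjoint_sup_right_of_disjoint_sup_left (hs hb) ?_).mono_right hle
    exact (ha.mono_right (sup_le (le_sSup hb) (sSup_le_sSup Set.sdiff_subset))).symm

theorem exists_sSupIndep_span_singleton_essential (R H : Type*) [Ring R] [AddCommGroup H]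
    [Module R H] :
    ∃ s : Set (Submodule R H), sSupIndep s ∧ (∀ N ∈ s, ∃ a, N = R ∙ a) ∧
      ∀ x : H, x ≠ 0 → ∃ k : R, k • x ≠ 0 ∧ k • x ∈ sSup s := by
  obtain ⟨s, hs⟩ : ∃ s : Set (Submodule R H),
      Maximal (· ∈ {s | sSupIndep s ∧ ∀ N ∈ s, ∃ a, N = R ∙ a}) s := by
    refine zorn_subset _ fun c hc hchain ↦
      ⟨⋃₀ c, ⟨?_, ?_⟩, fun s hs ↦ Set.subset_sUnion_of_mem hs⟩
    · exact iSupIndep_sUnion_of_directed hchain.directedOn fun s hs ↦ (hc hs).1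
    · rintro N ⟨t, ht, hN⟩
      exact (hc ht).2 N hN
  refine ⟨s, hs.prop.1, hs.prop.2, fun x hx ↦ ?_⟩
  by_contra! hzero
  have hdisj : Disjoint (R ∙ x) (sSup s) := by
    rw [disjoint_def]
    intro y hy hys
    obtain ⟨k, rfl⟩ := mem_span_singleton.mp hy
    by_contra hne
    exact hzero k hne hys
  have hmem : (R ∙ x) ∈ s := by
    refine hs.le_of_ge ⟨sSupIndep_insert hs.prop.1 hdisj, ?_⟩ (s.subset_insert _) (s.mem_insert _)
    rintro N (rfl | hN)
    exacts [⟨x, rfl⟩, hs.prop.2 N hN]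
  exact hx (span_singleton_eq_bot.mp (hdisj.eq_bot_of_le (le_sSup hmem)))

theorem finsupp_zsmul_surjective (I : Type*) {Q : Type*} [AddCommGroup Q] [DivisibleBy Q ℤ]
    {n : ℤ} (hn : n ≠ 0) : Function.Surjective fun x : I →₀ Q ↦ n • x := by
  classical
  refine fun y ↦ ⟨y.mapRange (fun q ↦ if q = 0 then 0 else DivisibleBy.div q n) (if_pos rfl), ?_⟩
  ext1 i
  simp only [Finsupp.smul_apply, Finsupp.mapRange_apply]
  split_ifs with h
  · rw [h, smul_zero]
  · exact DivisibleBy.div_cancel _ hn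

theorem exists_injective_finsupp_rat_prod_addCircle (H : Type u) [AddCommGroup H] :
    ∃ (I : Type u) (j : H →+ (I →₀ ℚ × AddCircle (1 : ℚ))), Function.Injective j := by
  classical
  obtain ⟨s, hindep, hspan, hess⟩ := exists_sSupIndep_span_singleton_essential ℤ H
  have hcyclic (N : s) : ∃ g : N.1 →ₗ[ℤ] ℚ × AddCircle (1 : ℚ), Function.Injective g := by
    obtain ⟨a, ha⟩ := hspan N N.2
    rw [ha]
    exact exists_injective_span_singleton a
  choose g hg using hcyclic
  let incl := DFinsupp.lsum ℕ (M := fun N : s ↦ N.1) fun N : s ↦ N.1.subtype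
  have hincl : Function.Injective incl := ((sSupIndep_iff s).mp hindep).dfinsupp_lsum_injective
  let G := (finsuppLequivDFinsupp ℤ).symm.toLinearMap ∘ₗ DFinsupp.mapRange.linearMap g
  have hG : Function.Injective G := (finsuppLequivDFinsupp ℤ).symm.injective.comp
    ((DFinsupp.mapRange_injective _ fun N ↦ map_zero (g N)).mpr hg)
  let : DivisibleBy (s →₀ ℚ × AddCircle (1 : ℚ)) ℤ :=
    divisibleByOfSMulRightSurj _ _ fun hn ↦ finsupp_zsmul_surjective s hn
  obtain ⟨j, hj⟩ := (Module.Baer.of_divisible _).extension_property_addMonoidHom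
    incl.toAddMonoidHom hincl G.toAddMonoidHom
  refine ⟨s, j, (injective_iff_map_eq_zero j).mpr fun x hx ↦ ?_⟩
  by_contra hne
  obtain ⟨k, hk, hmem⟩ := hess x hne
  rw [sSup_eq_iSup', iSup_eq_range_dfinsupp_lsum] at hmem
  obtain ⟨v, hv : incl v = k • x⟩ := hmem
  have hGv : G v = 0 :=
    calc G v = j (incl v) := (DFunLike.congr_fun hj v).symm
      _ = 0 := by rw [hv, map_zsmul, hx, smul_zero]
  rw [(map_eq_zero_iff G hG).mp hGv, map_zero] at hv
  exact hk hv.symm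

end DivisibleEmbedding

section Characters

theorem exists_quarter_le_norm_nsmul {t : AddCircle (1 : ℝ)} (ht : t ≠ 0) :
    ∃ n : ℕ, 1 / 4 ≤ ‖n • t‖ := by
  obtain ⟨r, rfl, hr⟩ : ∃ r : ℝ, (r : AddCircle (1 : ℝ)) = t ∧ |r| ≤ 1 / 2 := by
    obtain ⟨x, rfl⟩ := QuotientAddGroup.mk_surjective t
    refine ⟨x - round x, ?_, abs_sub_round x⟩
    rw [AddCircle.coe_sub, sub_eq_self, AddCircle.coe_eq_zero_iff]
    exact ⟨round x, zsmul_one _⟩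
  have hr0 : 0 < |r| := abs_pos.mpr fun h ↦ ht (by rw [h, AddCircle.coe_zero])
  have hnorm (n : ℕ) (hn : n * |r| ≤ 1 / 2) : ‖n • (r : AddCircle (1 : ℝ))‖ = n * |r| := by
    rw [← AddCircle.coe_nsmul, (AddCircle.norm_coe_eq_abs_iff (1 : ℝ) one_ne_zero).2]
    · rw [nsmul_eq_mul, abs_mul, Nat.abs_cast]
    · rwa [nsmul_eq_mul, abs_mul, Nat.abs_cast, abs_one]
  rcases le_or_gt (1 / 4) |r| with hlarge | hsmall
  · exact ⟨1, by rwa [hnorm 1 (by rwa [Nat.cast_one, one_mul]), Nat.cast_one, one_mul]⟩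
  · have hmul : 1 / (4 * |r|) * |r| = 1 / 4 := by field_simp
    have hle := Nat.le_ceil (1 / (4 * |r|))
    have hlt := Nat.ceil_lt_add_one (a := 1 / (4 * |r|)) (by positivity)
    refine ⟨⌈1 / (4 * |r|)⌉₊, ?_⟩
    rw [hnorm _ (by nlinarith)]
    nlinarith

theorem exists_injective_addCircle_rat_real :
    ∃ ι : AddCircle (1 : ℚ) →+ AddCircle (1 : ℝ), Function.Injective ι := by
  refine ⟨QuotientAddGroup.map _ _ (Rat.castHom ℝ).toAddMonoidHom ?_, ?_⟩
  · rintro x ⟨k, rfl⟩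
    exact ⟨k, by simp⟩
  · refine (injective_iff_map_eq_zero _).mpr fun x hx ↦ ?_
    obtain ⟨q, rfl⟩ := QuotientAddGroup.mk_surjective x
    obtain ⟨k, hk⟩ := (AddCircle.coe_eq_zero_iff (1 : ℝ)).mp hx
    refine (AddCircle.coe_eq_zero_iff (1 : ℚ)).mpr ⟨k, ?_⟩
    rw [zsmul_one] at hk ⊢
    have hk_cast : (k : ℝ) = (q : ℝ) := hk
    exact_mod_cast hk_cast

theorem exists_character_quarter_le_norm {G : Type*} [AddCommGroup G] {y : G} (hy : y ≠ 0) :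
    ∃ χ : G →+ AddCircle (1 : ℝ), 1 / 4 ≤ ‖χ y‖ := by
  obtain ⟨c, hc⟩ := CharacterModule.exists_character_apply_ne_zero_of_ne_zero hy
  obtain ⟨ι, hι⟩ := exists_injective_addCircle_rat_real
  obtain ⟨n, hn⟩ := exists_quarter_le_norm_nsmul (t := ι (c y)) ((map_ne_zero_iff ι hι).mpr hc)
  exact ⟨n • ι.comp c, hn⟩

theorem exists_finset_character_norm_lt {G H : Type*} [AddCommGroup G] [AddCommGroup H] {f : G → H}
    (hf : @Continuous _ _ (bohrTopology G) (bohrTopology H) f) (ψ : H →+ AddCircle (1 : ℝ))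
    {ε : ℝ} (hε : 0 < ε) (x : G) :
    ∃ Φ : Finset (G →+ AddCircle (1 : ℝ)),
      ∀ y, (∀ φ ∈ Φ, φ y = φ x) → ‖ψ (f y - f x)‖ < ε := by
  let := bohrTopology G
  let := bohrTopology H
  have hψ : Continuous ψ := continuous_iInf_dom (i := ψ) continuous_induced_dom
  have hball := (hψ.comp hf).continuousAt (x := x) (Metric.ball_mem_nhds _ hε)
  have hnhds : nhds x = ⨅ χ : G →+ AddCircle (1 : ℝ), Filter.comap χ (nhds (χ x)) := by
    refine (nhds_iInf (ι := G →+ AddCircle (1 : ℝ)) (a := x)).trans ?_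
    simp_rw [nhds_induced]
  rw [hnhds] at hball
  obtain ⟨Φ, hΦ⟩ := Filter.mem_iInf_finite _ |>.mp (Filter.mem_map.mp hball)
  refine ⟨Φ, fun y hy ↦ ?_⟩
  have hpure : pure y ≤ ⨅ φ ∈ Φ, Filter.comap (φ : G → AddCircle (1 : ℝ)) (nhds (φ x)) := by
    refine le_iInf₂ fun φ hφ ↦ ?_
    rw [← Filter.map_le_iff_le_comap, Filter.map_pure, hy φ hφ]
    exact pure_le_nhds _
  rw [map_sub, ← mem_ball_iff_norm]
  exact hpure hΦ

end Characters

section AlmostInvariance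

variable {α β C M : Type*}

/-- Every color occurs in `Y` a multiple of `p` times. -/
def IsBalanced [DecidableEq C] (p : ℕ) (col : α → C) (Y : Finset α) : Prop :=
  ∀ γ, p ∣ (Y.filter fun a ↦ col a = γ).card

namespace IsBalanced

variable [DecidableEq C] {p : ℕ} {col : α → C} {Y Z : Finset α}

theorem of_forall_eq {γ : C} (hγ : ∀ a ∈ Y, col a = γ) (hY : p ∣ Y.card) : IsBalanced p col Y := by
  intro δ
  by_cases hδ : γ = δ
  · rwa [Finset.filter_true_of_mem fun a ha ↦ (hγ a ha).trans hδ]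
  · rw [Finset.filter_false_of_mem fun a ha h ↦ hδ ((hγ a ha).symm.trans h), Finset.card_empty]
    exact dvd_zero p

theorem disjUnion (hY : IsBalanced p col Y) (hZ : IsBalanced p col Z) (h : Disjoint Y Z) :
    IsBalanced p col (Y.disjUnion Z h) := by
  intro γ
  rw [Finset.filter_disjUnion, Finset.card_disjUnion]
  exact dvd_add (hY γ) (hZ γ)

theorem map {e : β ↪ α} {Y : Finset β} (hY : IsBalanced p (col ∘ e) Y) :
    IsBalanced p col (Y.map e) := by
  intro γ
  rw [Finset.filter_map, Finset.card_map]
  exact hY γ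

theorem sum_eq_zero [AddCommGroup M] (hY : IsBalanced p col Y) {w : C → M}
    (hw : ∀ γ, p • w γ = 0) : ∑ a ∈ Y, w (col a) = 0 := by
  rw [Finset.sum_comp]
  refine Finset.sum_eq_zero fun γ _ ↦ ?_
  obtain ⟨m, hm⟩ := hY γ
  rw [hm, mul_comm, mul_smul, hw, smul_zero]

end IsBalanced

/-- Each character changes little on `F x` when `x` is enlarged by a set that is balanced for a
suitable finite coloring. This is all that is used of the Bohr continuity of a map on
`⊕_α ℤ/pℤ`, restricted to the sums of finitely many distinct basis vectors. -/
def IsAlmostInvariant [AddCommGroup M] (p : ℕ) (F : Finset α → M) : Prop :=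
  ∀ (χ : M →+ AddCircle (1 : ℝ)) (ε : ℝ), 0 < ε → ∀ x : Finset α,
    ∃ (k : ℕ) (col : α → Fin k), ∀ (Y : Finset α) (h : Disjoint x Y),
      IsBalanced p col Y → ‖χ (F (x.disjUnion Y h) - F x)‖ < ε

theorem IsAlmostInvariant.comp_map [AddCommGroup M] {p : ℕ} {F : Finset α → M}
    (hF : IsAlmostInvariant p F) (e : β ↪ α) : IsAlmostInvariant p fun A ↦ F (A.map e) := by
  intro χ ε hε x
  obtain ⟨k, col, hcol⟩ := hF χ ε hε (x.map e)
  refine ⟨k, col ∘ e, fun Y hxY hY ↦ ?_⟩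
  have hmap := hcol (Y.map e) ((Finset.disjoint_map e).mpr hxY) hY.map
  rwa [← Finset.map_disjUnion'] at hmap

/-- The sum `∑_{a ∈ A} e_a` of basis vectors of `⊕_α ℤ/pℤ`. -/
noncomputable def charVec (p : ℕ) (A : Finset α) : α →₀ ZMod p :=
  ∑ a ∈ A, Finsupp.single a 1

theorem isAlmostInvariant_of_continuous {H : Type*} [AddCommGroup H] [AddCommGroup M] {p : ℕ}
    (hp : 0 < p) {f : (α →₀ ZMod p) → H}
    (hf : @Continuous _ _ (bohrTopology (α →₀ ZMod p)) (bohrTopology H) f) (j : H →+ M) :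
    IsAlmostInvariant p fun A ↦ j (f (charVec p A) - f 0) := by
  intro χ ε hε x
  obtain ⟨Φ, hΦ⟩ := exists_finset_character_norm_lt hf (χ.comp j) hε (charVec p x)
  have : Fact ((0 : ℝ) < 1) := ⟨one_pos⟩
  have : Finite {t : AddCircle (1 : ℝ) | p • t = 0} := AddCircle.finite_torsion (1 : ℝ) hp
  have htorsion (φ : (α →₀ ZMod p) →+ AddCircle (1 : ℝ)) (a : α) :
      p • φ (Finsupp.single a 1) = 0 := by
    rw [← map_nsmul, Finsupp.smul_single, nsmul_one, CharP.cast_eq_zero, Finsupp.single_zero,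
      map_zero]
  let values (a : α) (φ : Φ) : {t : AddCircle (1 : ℝ) | p • t = 0} :=
    ⟨φ.1 (Finsupp.single a 1), htorsion φ a⟩
  obtain ⟨k, ⟨e⟩⟩ := Finite.exists_equiv_fin (Φ → {t : AddCircle (1 : ℝ) | p • t = 0})
  refine ⟨k, e ∘ values, fun Y hxY hY ↦ ?_⟩
  rw [← map_sub, sub_sub_sub_cancel_right]
  refine hΦ _ fun φ hφ ↦ ?_
  have hsum := hY.sum_eq_zero (w := fun i ↦ (e.symm i ⟨φ, hφ⟩).1) fun i ↦ (e.symm i ⟨φ, hφ⟩).2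
  simp only [Function.comp_apply, Equiv.symm_apply_apply] at hsum
  rw [charVec, charVec, Finset.sum_disjUnion, map_add, add_eq_left, map_sum]
  exact hsum

end AlmostInvariance

section IncreasingSequences

theorem eqOn_of_map_eq {J : Finset ℕ} {s t : ℕ ↪o ℕ}
    (h : J.map s.toEmbedding = J.map t.toEmbedding) : Set.EqOn s t J := by
  have hrange : Set.range (fun i : J ↦ s i) = Set.range fun i : J ↦ t i := by
    have hcoe := congrArg (fun A : Finset ℕ ↦ (A : Set ℕ)) h
    simpa [Set.image_eq_range] using hcoe
  have hmono (u : ℕ ↪o ℕ) : StrictMono fun i : J ↦ u i := fun _ _ hlt ↦ u.strictMono hlt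
  have heq := ((hmono s).range_inj (hmono t)).mp hrange
  exact fun i hi ↦ congrFun heq ⟨i, hi⟩

theorem exists_orderEmbedding_forall_mem {Y : ℕ → Set ℕ} (hY : ∀ j, (Y j).Infinite) :
    ∃ s : ℕ ↪o ℕ, ∀ j, s j ∈ Y j := by
  obtain ⟨s, hs, hsY⟩ := Filter.extraction_forall_of_frequently fun j ↦
    Nat.frequently_atTop_iff_infinite.mpr (hY j)
  exact ⟨.ofStrictMono s hs, hsY⟩

/-- A strictly increasing sequence whose first `#A` terms are the elements of `A`. -/
noncomputable def enumeration (A : Finset ℕ) : ℕ ↪o ℕ :=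
  .ofStrictMono
    (fun i ↦ if h : i < A.card then A.orderEmbOfFin rfl ⟨i, h⟩ else A.sup id + 1 + i) <| by
      refine strictMono_nat_of_lt_succ fun i ↦ ?_
      have hle (h : i < A.card) : A.orderEmbOfFin rfl ⟨i, h⟩ ≤ A.sup id :=
        Finset.le_sup (f := id) (A.orderEmbOfFin_mem rfl _)
      split_ifs with hi hsucc hsucc
      · exact (A.orderEmbOfFin rfl).strictMono (Fin.mk_lt_mk.mpr i.lt_succ_self)
      · have := hle hi
        lia
      · lia
      · lia

theorem enumeration_mem {A : Finset ℕ} {i : ℕ} (hi : i < A.card) : enumeration A i ∈ A := by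
  simp only [enumeration, OrderEmbedding.coe_ofStrictMono, dif_pos hi]
  exact A.orderEmbOfFin_mem rfl _

theorem map_enumeration (A : Finset ℕ) :
    (Finset.range A.card).map (enumeration A).toEmbedding = A := by
  refine Finset.eq_of_subset_of_card_le (fun x hx ↦ ?_) (by simp)
  obtain ⟨i, hi, rfl⟩ := Finset.mem_map.mp hx
  exact enumeration_mem (Finset.mem_range.mp hi)

theorem enumeration_map_range {n i : ℕ} (s : ℕ ↪o ℕ) (hi : i < n) :
    enumeration ((Finset.range n).map s.toEmbedding) i = s i := by
  have hmap := map_enumeration ((Finset.range n).map s.toEmbedding)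
  rw [Finset.card_map, Finset.card_range] at hmap
  exact eqOn_of_map_eq hmap (Finset.mem_coe.mpr (Finset.mem_range.mpr hi))

theorem exists_orderEmbedding_forall_trans_eq {C : Type*} [Finite C] {m : ℕ} {c : (ℕ ↪o ℕ) → C}
    (hc : ∀ s t : ℕ ↪o ℕ, (∀ i < m, s i = t i) → c s = c t) :
    ∃ e : ℕ ↪o ℕ, ∀ s : ℕ ↪o ℕ, c (s.trans e) = c e := by
  obtain ⟨S, hS, γ, hγ⟩ := exists_infinite_isHomogeneous_nat m (c ∘ enumeration)
  obtain ⟨e, he⟩ := exists_orderEmbedding_forall_mem (Y := fun _ ↦ S) fun _ ↦ hS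
  have hcol (u : ℕ ↪o ℕ) (hu : ∀ i, u i ∈ S) : c u = γ := by
    rw [hc u _ fun i hi ↦ (enumeration_map_range u hi).symm]
    refine hγ _ (by rw [Finset.card_map, Finset.card_range]) fun x hx ↦ ?_
    obtain ⟨i, -, rfl⟩ := Finset.mem_map.mp hx
    exact hu i
  exact ⟨e, fun s ↦ (hcol _ fun i ↦ he (s i)).trans (hcol e he).symm⟩

theorem exists_enumeration_trans {n : ℕ} {s g : ℕ ↪o ℕ} {W : Finset ℕ}
    (hW : W.map g.toEmbedding ⊇ (Finset.range n).map s.toEmbedding) :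
    ∃ Q ∈ W.powersetCard n, ∀ i < n, s i = g (enumeration Q i) := by
  obtain ⟨Q, hQW, hQ⟩ := Finset.subset_map_iff.mp hW
  have hcard : Q.card = n := by
    rw [← Finset.card_map g.toEmbedding, ← hQ, Finset.card_map, Finset.card_range]
  refine ⟨Q, Finset.mem_powersetCard.mpr ⟨hQW, hcard⟩, fun i hi ↦ ?_⟩
  refine eqOn_of_map_eq (J := Finset.range n) (t := (enumeration Q).trans g) ?_
    (Finset.mem_coe.mpr (Finset.mem_range.mpr hi))
  have hmap := map_enumeration Q
  rw [hcard] at hmap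
  rw [hQ, ← hmap, Finset.map_map, hmap]
  rfl

end IncreasingSequences

section Canonization

variable {I K : Type*} {n : ℕ}

/-- The functions `ξ k` depend on the first `n` terms of an increasing sequence only, and whether
two of their values agree depends only on the relative position of the two sequences. -/
structure IsIndiscernible (n : ℕ) (ξ : K → (ℕ ↪o ℕ) → I) : Prop where
  congr : ∀ k {s t : ℕ ↪o ℕ}, (∀ i < n, s i = t i) → ξ k s = ξ k t
  trans_iff : ∀ {k l} {s t : ℕ ↪o ℕ} (θ : ℕ ↪o ℕ),
    ξ k (s.trans θ) = ξ l (t.trans θ) ↔ ξ k s = ξ l t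

theorem exists_isIndiscernible_trans [Finite K] {ξ : K → (ℕ ↪o ℕ) → I}
    (hξ : ∀ k (s t : ℕ ↪o ℕ), (∀ i < n, s i = t i) → ξ k s = ξ k t) :
    ∃ e : ℕ ↪o ℕ, IsIndiscernible n fun k s ↦ ξ k (s.trans e) := by
  let P := (Finset.range (2 * n)).powersetCard n
  have hP (Q : P) (i : ℕ) (hi : i < n) : enumeration Q i < 2 * n := by
    have hQ := Finset.mem_powersetCard.mp Q.2
    exact Finset.mem_range.mp (hQ.1 (enumeration_mem (hi.trans_eq hQ.2.symm)))
  let c (g : ℕ ↪o ℕ) (q : (K × P) × K × P) : Prop :=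
    ξ q.1.1 ((enumeration q.1.2).trans g) = ξ q.2.1 ((enumeration q.2.2).trans g)
  obtain ⟨e, he⟩ := exists_orderEmbedding_forall_trans_eq (m := 2 * n) (c := c) fun s t hst ↦ by
    have hξst (q : K × P) : ξ q.1 ((enumeration q.2).trans s) = ξ q.1 ((enumeration q.2).trans t) :=
      hξ _ _ _ fun i hi ↦ hst _ (hP _ i hi)
    exact funext fun q ↦ by simp only [c, hξst]
  refine ⟨e, fun k {s t} hst ↦ hξ k _ _ fun i hi ↦ congrArg e (hst i hi), fun {k l s t} θ ↦ ?_⟩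
  obtain ⟨W, hstW, hW⟩ := Infinite.exists_superset_card_eq
    ((Finset.range n).map s.toEmbedding ∪ (Finset.range n).map t.toEmbedding) (2 * n)
    ((Finset.card_union_le _ _).trans (by simp [two_mul]))
  have hWmap := map_enumeration W
  rw [hW] at hWmap
  rw [← hWmap] at hstW
  obtain ⟨Q, hQ, hsQ⟩ := exists_enumeration_trans (Finset.union_subset_left hstW)
  obtain ⟨R, hR, htR⟩ := exists_enumeration_trans (Finset.union_subset_right hstW)
  have hcol (θ : ℕ ↪o ℕ) : ξ k (s.trans (θ.trans e)) = ξ l (t.trans (θ.trans e)) ↔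
      c e ((k, ⟨Q, hQ⟩), l, ⟨R, hR⟩) := by
    rw [← he ((enumeration W).trans θ), hξ k (s.trans _) ((enumeration Q).trans
      (((enumeration W).trans θ).trans e)), hξ l (t.trans _) ((enumeration R).trans
      (((enumeration W).trans θ).trans e))]
    · intro i hi
      exact congrArg (fun x ↦ e (θ x)) (htR i hi)
    · intro i hi
      exact congrArg (fun x ↦ e (θ x)) (hsQ i hi)
  exact (hcol θ).trans (hcol (.refl _)).symm

/-- The increasing enumeration of `ℕ ∖ {a}`. -/
def skipAt (a : ℕ) : ℕ ↪o ℕ :=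
  .ofStrictMono (fun x ↦ if x < a then x else x + 1) fun x y hxy ↦ by
    dsimp only
    split_ifs <;> lia

theorem skipAt_apply (a x : ℕ) : skipAt a x = if x < a then x else x + 1 := rfl

theorem exists_eq_skipAt_trans {u v : ℕ ↪o ℕ} {j : ℕ} (hoff : ∀ i ≠ j, u i = v i)
    (hlt : u j < v j) :
    ∃ g : ℕ ↪o ℕ, u = (skipAt (j + 1)).trans g ∧ v = (skipAt j).trans g := by
  have hg : StrictMono fun x ↦ if x ≤ j then u x else v (x - 1) := by
    refine strictMono_nat_of_lt_succ fun x ↦ ?_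
    rcases lt_trichotomy x j with hx | rfl | hx
    · simp [hx.le, Nat.succ_le_of_lt hx]
    · simpa using hlt
    · simp [hx.not_ge, (hx.trans x.lt_succ_self).not_ge, Nat.zero_lt_of_lt hx]
  refine ⟨.ofStrictMono _ hg, ?_, ?_⟩ <;> ext x <;>
    simp only [RelEmbedding.coe_trans, Function.comp_apply, OrderEmbedding.coe_ofStrictMono,
      skipAt_apply]
  · rcases lt_or_ge x (j + 1) with hx | hx
    · simp [hx, Nat.lt_succ_iff.mp hx]
    · simp [hx.not_gt, hoff x (by lia), show ¬ x + 1 ≤ j by lia]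
  · rcases lt_or_ge x j with hx | hx
    · simp [hx, hx.le, hoff x hx.ne]
    · simp [hx.not_gt, show ¬ x + 1 ≤ j by lia]

theorem exists_orderEmbedding_splice {s t : ℕ ↪o ℕ} (hle : ∀ i, s i ≤ t i) (m : ℕ) :
    ∃ r : ℕ ↪o ℕ, ∀ i, r i = if i < m then s i else t i := by
  refine ⟨.ofStrictMono (fun i ↦ if i < m then s i else t i)
    (strictMono_nat_of_lt_succ fun i ↦ ?_), fun i ↦ rfl⟩
  have hs := s.strictMono i.lt_succ_self
  have ht := t.strictMono i.lt_succ_self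
  have hle := hle i
  split_ifs <;> lia

open Classical in
/-- The coordinates `j < n` on which `ξ` depends, tested on one pair of sequences that differ in
their `j`-th terms only. -/
noncomputable def essentialCoords (n : ℕ) (ξ : (ℕ ↪o ℕ) → I) : Finset ℕ :=
  (Finset.range n).filter fun j ↦ ξ (skipAt (j + 1)) ≠ ξ (skipAt j)

theorem lt_of_mem_essentialCoords {ξ : (ℕ ↪o ℕ) → I} {j : ℕ} (hj : j ∈ essentialCoords n ξ) :
    j < n := by
  classical exact Finset.mem_range.mp (Finset.mem_filter.mp hj).1

namespace IsIndiscernible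

variable {ξ : K → (ℕ ↪o ℕ) → I}

theorem eq_iff_notMem_essentialCoords (hξ : IsIndiscernible n ξ) {k : K} {u v : ℕ ↪o ℕ} {j : ℕ}
    (hj : j < n) (hoff : ∀ i ≠ j, u i = v i) (hlt : u j < v j) :
    ξ k u = ξ k v ↔ j ∉ essentialCoords n (ξ k) := by
  obtain ⟨g, rfl, rfl⟩ := exists_eq_skipAt_trans hoff hlt
  simp [hξ.trans_iff, essentialCoords, hj]

theorem eq_of_eqOn_compl_singleton (hξ : IsIndiscernible n ξ) {k : K} {u v : ℕ ↪o ℕ} {j : ℕ}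
    (hoff : ∀ i ≠ j, u i = v i) (hj : j ∈ essentialCoords n (ξ k) → u j = v j) : ξ k u = ξ k v := by
  by_cases hjn : j < n
  · rcases lt_trichotomy (u j) (v j) with hlt | heq | hgt
    · exact (hξ.eq_iff_notMem_essentialCoords hjn hoff hlt).mpr fun hmem ↦ hlt.ne (hj hmem)
    · exact hξ.congr k fun i _ ↦ (eq_or_ne i j).elim (fun h ↦ h ▸ heq) (hoff i)
    · refine ((hξ.eq_iff_notMem_essentialCoords hjn (fun i hi ↦ (hoff i hi).symm) hgt).mpr ?_).symm
      exact fun hmem ↦ hgt.ne' (hj hmem)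
  · exact hξ.congr k fun i hi ↦ hoff i (by lia)

theorem eq_of_le_of_eqOn_essentialCoords (hξ : IsIndiscernible n ξ) {k : K} {s t : ℕ ↪o ℕ}
    (hle : ∀ i, s i ≤ t i) (hst : Set.EqOn s t (essentialCoords n (ξ k))) : ξ k s = ξ k t := by
  choose r hr using exists_orderEmbedding_splice hle
  have hstep (m : ℕ) : ξ k (r m) = ξ k t := by
    induction m with
    | zero => exact hξ.congr k fun i _ ↦ by simp [hr]
    | succ m ih =>
      rw [← ih]
      refine hξ.eq_of_eqOn_compl_singleton (j := m) (fun i hi ↦ ?_) fun hm ↦ ?_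
      · have hiff : i < m + 1 ↔ i < m := by lia
        simp only [hr, hiff]
      · simpa [hr] using hst hm
  rw [← hstep n]
  exact hξ.congr k fun i hi ↦ by simp [hr, hi]

theorem eq_of_eqOn_essentialCoords (hξ : IsIndiscernible n ξ) {k : K} {s t : ℕ ↪o ℕ}
    (hst : Set.EqOn s t (essentialCoords n (ξ k))) : ξ k s = ξ k t := by
  let m : ℕ ↪o ℕ := .ofStrictMono (fun i ↦ max (s i) (t i)) fun i j hij ↦
    max_lt_max (s.strictMono hij) (t.strictMono hij)
  have hsm : ξ k s = ξ k m := hξ.eq_of_le_of_eqOn_essentialCoords (fun i ↦ le_max_left _ _)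
    fun i hi ↦ (max_eq_left (hst hi).ge).symm
  have htm : ξ k t = ξ k m := hξ.eq_of_le_of_eqOn_essentialCoords (fun i ↦ le_max_right _ _)
    fun i hi ↦ (max_eq_right (hst hi).le).symm
  exact hsm.trans htm.symm

theorem map_essentialCoords_subset (hξ : IsIndiscernible n ξ) {k l : K} {s t : ℕ ↪o ℕ}
    (h : ξ k s = ξ l t) :
    (essentialCoords n (ξ k)).map s.toEmbedding ⊆ (essentialCoords n (ξ l)).map t.toEmbedding := by
  intro a ha
  obtain ⟨j, hj, rfl⟩ := Finset.mem_map.mp ha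
  by_contra hnot
  have hskip {x : ℕ} (hx : x ≠ s j) : skipAt (s j + 1) x = skipAt (s j) x := by
    simp only [skipAt_apply]
    split_ifs <;> lia
  have hk : ξ k (s.trans (skipAt (s j + 1))) ≠ ξ k (s.trans (skipAt (s j))) := by
    refine fun heq ↦ (hξ.eq_iff_notMem_essentialCoords (lt_of_mem_essentialCoords hj)
      (fun i hi ↦ ?_) ?_).mp heq hj
    · exact hskip (s.injective.ne hi)
    · simp [skipAt_apply]
  refine hk (((hξ.trans_iff _).mpr h).trans (.trans ?_ ((hξ.trans_iff _).mpr h).symm))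
  exact hξ.eq_of_eqOn_essentialCoords fun i hi ↦ hskip fun heq ↦
    hnot (Finset.mem_map.mpr ⟨i, hi, heq⟩)

theorem map_essentialCoords_eq (hξ : IsIndiscernible n ξ) {k l : K} {s t : ℕ ↪o ℕ}
    (h : ξ k s = ξ l t) :
    (essentialCoords n (ξ k)).map s.toEmbedding = (essentialCoords n (ξ l)).map t.toEmbedding :=
  (hξ.map_essentialCoords_subset h).antisymm (hξ.map_essentialCoords_subset h.symm)

end IsIndiscernible

end Canonization

section RadoGraph

theorem exists_le_forall_mem_bitIndices_iff (N : ℕ) (T : Set ℕ) :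
    ∃ z, N ≤ z ∧ ∀ a < N, a ∈ z.bitIndices ↔ a ∈ T := by
  classical
  let A := insert N ((Finset.range N).filter (· ∈ T))
  refine ⟨∑ i ∈ A, 2 ^ i, ?_, fun a ha ↦ ?_⟩
  · exact N.lt_two_pow_self.le.trans
      (Finset.single_le_sum (f := (2 ^ ·)) (fun _ _ ↦ zero_le) (Finset.mem_insert_self N _))
  · rw [← List.mem_toFinset, Finset.toFinset_bitIndices_sum_two_pow]
    simp [A, ha, ha.ne]

theorem exists_color_forall_exists_mem_bitIndices_iff {C : Type*} [Finite C] (col : ℕ → C) :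
    ∃ γ N₀, ∀ N (T : Set ℕ), ∃ z, N ≤ z ∧ N₀ ≤ z ∧ col z = γ ∧
      ∀ a, N₀ ≤ a → a < N → (a ∈ z.bitIndices ↔ a ∈ T) := by
  classical
  by_contra! hcon
  have hbad (G : Finset C) : ∃ (N : ℕ) (T : Set ℕ), ∀ z, N ≤ z → col z ∈ G →
      ¬ ∀ a < N, a ∈ z.bitIndices ↔ a ∈ T := by
    induction G using Finset.induction_on with
    | empty => exact ⟨0, ∅, by simp⟩
    | insert γ G _ ih =>
      obtain ⟨N, T, hT⟩ := ih
      obtain ⟨N', T', hT'⟩ := hcon γ N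
      refine ⟨max N N', {a | if a < N then a ∈ T else a ∈ T'}, fun z hz hcol hall ↦ ?_⟩
      rcases Finset.mem_insert.mp hcol with rfl | hG
      · obtain ⟨a, hNa, haN', ha⟩ := hT' z (le_of_max_le_right hz) (le_of_max_le_left hz) rfl
        have := hall a (lt_max_of_lt_right haN')
        simp only [Set.mem_ofPred_eq, hNa.not_gt, if_false] at this
        tauto
      · refine hT z (le_of_max_le_left hz) hG fun a ha ↦ ?_
        simpa [ha] using hall a (lt_max_of_lt_left ha)
  have := Fintype.ofFinite C
  obtain ⟨N, T, hT⟩ := hbad Finset.univ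
  obtain ⟨z, hz, hzT⟩ := exists_le_forall_mem_bitIndices_iff N T
  exact hT z hz (Finset.mem_univ _) hzT

-- Joining `a < b` when `a` is a binary digit of `b` gives the Rado graph, so this says that every
-- graph on `ℕ` is an induced subgraph of a single color class.
theorem exists_orderEmbedding_mem_bitIndices_iff {C : Type*} [Finite C] (col : ℕ → C)
    (P : ℕ → ℕ → Prop) :
    ∃ (s : ℕ ↪o ℕ) (γ : C), (∀ i, col (s i) = γ) ∧
      ∀ a b, a < b → (s a ∈ (s b).bitIndices ↔ P a b) := by
  obtain ⟨γ, N₀, hγ⟩ := exists_color_forall_exists_mem_bitIndices_iff col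
  have hnext (b : ℕ) (X : Set.Iio b → ℕ) : ∃ z, N₀ ≤ z ∧ col z = γ ∧ (∀ a, X a < z) ∧
      ((∀ a, N₀ ≤ X a) → Function.Injective X → ∀ a, X a ∈ z.bitIndices ↔ P a b) := by
    obtain ⟨M, hM⟩ := (Set.finite_range X).bddAbove
    have hXM (a : Set.Iio b) : X a < M + 1 := Nat.lt_succ_of_le (hM ⟨a, rfl⟩)
    obtain ⟨z, hMz, hz, hcol, hzT⟩ := hγ (M + 1) {x | ∃ a, X a = x ∧ P a b}
    refine ⟨z, hz, hcol, fun a ↦ (hXM a).trans_le hMz, fun hX hinj a ↦ ?_⟩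
    rw [hzT _ (hX a) (hXM a)]
    exact ⟨fun ⟨a', hXa, hP⟩ ↦ hinj hXa ▸ hP, fun hP ↦ ⟨a, rfl, hP⟩⟩
  choose next hge hcol hlt hiff using hnext
  obtain ⟨s, hs⟩ : ∃ s : ℕ → ℕ, ∀ b, s b = next b fun a ↦ s a :=
    ⟨wellFounded_lt.fix fun b ih ↦ next b fun a ↦ ih a a.2, fun b ↦ wellFounded_lt.fix_eq _ b⟩
  have hmono : StrictMono s := fun a b hab ↦
    (hlt b (fun a ↦ s a) ⟨a, hab⟩).trans_eq (hs b).symm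
  refine ⟨.ofStrictMono s hmono, γ, fun b ↦ ?_, fun a b hab ↦ ?_⟩ <;>
    rw [OrderEmbedding.coe_ofStrictMono, hs b]
  · exact hcol b _
  · refine hiff b (fun a ↦ s a) (fun a ↦ ?_) (hmono.injective.comp Subtype.val_injective) ⟨a, hab⟩
    exact (hge a _).trans_eq (hs a).symm

/-- `A` is a clique of the Rado graph, in which `a < b` are joined when `a` is a binary digit
of `b`. -/
def IsBitClique (A : Finset ℕ) : Prop :=
  ∀ a ∈ A, ∀ b ∈ A, a < b → a ∈ b.bitIndices

variable {J : Finset ℕ} {s : ℕ ↪o ℕ}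

theorem isBitClique_map (hs : ∀ a b, a < b → (s a ∈ (s b).bitIndices ↔ a ∈ J ∧ b ∈ J)) :
    IsBitClique (J.map s.toEmbedding) := by
  simp only [IsBitClique, Finset.forall_mem_map]
  exact fun a ha b hb hab ↦ (hs a b (s.lt_iff_lt.mp hab)).mpr ⟨ha, hb⟩

theorem IsBitClique.subset_of_map
    (hs : ∀ a b, a < b → (s a ∈ (s b).bitIndices ↔ a ∈ J ∧ b ∈ J)) {A : Finset ℕ}
    (hA : IsBitClique (A.map s.toEmbedding)) (hcard : A.card ≠ 1) : A ⊆ J := by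
  simp only [IsBitClique, Finset.forall_mem_map] at hA
  intro a ha
  have hlt : 1 < A.card := lt_of_le_of_ne (Finset.card_pos.mpr ⟨a, ha⟩) hcard.symm
  obtain ⟨b, hb, hba⟩ := Finset.exists_mem_ne hlt a
  rcases lt_or_gt_of_ne hba with hlt | hlt
  · exact ((hs b a hlt).mp (hA b hb a ha (s.strictMono hlt))).2
  · exact ((hs a b hlt).mp (hA a ha b hb (s.strictMono hlt))).1

end RadoGraph

section CoordinateSum

variable {I K Q : Type*} [AddCommGroup Q] {n p : ℕ}

theorem IsAlmostInvariant.exists_norm_lt {α M : Type*} [AddCommGroup M] {F : Finset α → M}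
    (hF : IsAlmostInvariant p F) (hF0 : F ∅ = 0) (χ : M →+ AddCircle (1 : ℝ)) {ε : ℝ}
    (hε : 0 < ε) :
    ∃ (k : ℕ) (col : α → Fin k), ∀ Y, IsBalanced p col Y → ‖χ (F Y)‖ < ε := by
  obtain ⟨k, col, hcol⟩ := hF χ ε hε ∅
  refine ⟨k, col, fun Y hY ↦ ?_⟩
  simpa [hF0] using hcol Y (Finset.disjoint_empty_left Y) hY

/-- On every `n`-element set, `F` takes the same nonzero values `l k`, at the places `ξ k`. -/
structure IsUniformExpansion [Fintype K] (n : ℕ) (F : Finset ℕ → I →₀ Q)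
    (ξ : K → (ℕ ↪o ℕ) → I) (l : K → Q) : Prop where
  ne_zero : ∀ k, l k ≠ 0
  injective : ∀ s, Function.Injective fun k ↦ ξ k s
  apply_map_range : ∀ s : ℕ ↪o ℕ,
    F ((Finset.range n).map s.toEmbedding) = ∑ k, Finsupp.single (ξ k s) (l k)

/-- On an `n`-element set, `F` is the sum of contributions `h j x` of the elements `x` in their
positions `j`, and `x` can be recovered, as `own i`, from any place `i` to which it contributes. -/
structure IsCoordinateSum (n : ℕ) (F : Finset ℕ → I →₀ Q) (h : ℕ → ℕ → I →₀ Q)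
    (own : I → ℕ) : Prop where
  apply_map_range : ∀ s : ℕ ↪o ℕ,
    F ((Finset.range n).map s.toEmbedding) = ∑ j ∈ Finset.range n, h j (s j)
  own_eq : ∀ j x, ∀ i ∈ (h j x).support, own i = x

namespace IsIndiscernible

variable {ξ : K → (ℕ ↪o ℕ) → I}

theorem eq_of_isBitClique (hξ : IsIndiscernible n ξ) {k l : K} {s t : ℕ ↪o ℕ}
    (hcard : (essentialCoords n (ξ k)).card ≠ 1)
    (hs : ∀ a b, a < b → (s a ∈ (s b).bitIndices ↔
      a ∈ essentialCoords n (ξ k) ∧ b ∈ essentialCoords n (ξ k)))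
    (ht : IsBitClique ((essentialCoords n (ξ k)).map t.toEmbedding)) (heq : ξ k t = ξ l s) :
    ξ l s = ξ k s := by
  have hmap := hξ.map_essentialCoords_eq heq
  have hcard_eq : (essentialCoords n (ξ k)).card = (essentialCoords n (ξ l)).card := by
    rw [← Finset.card_map t.toEmbedding, hmap, Finset.card_map]
  have hsub : essentialCoords n (ξ l) ⊆ essentialCoords n (ξ k) :=
    IsBitClique.subset_of_map hs (hmap ▸ ht) (hcard_eq ▸ hcard)
  rw [Finset.eq_of_subset_of_card_le hsub hcard_eq.le] at hmap
  rw [← heq, hξ.eq_of_eqOn_essentialCoords (eqOn_of_map_eq hmap)]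

variable [Fintype K] {F : Finset ℕ → I →₀ Q} {l : K → Q}

-- If `k` had another number of essential coordinates, a character that sees `ξ k t` exactly when
-- these coordinates of `t` form a clique of the Rado graph would violate almost invariance.
theorem card_essentialCoords_eq_one (hξ : IsIndiscernible n ξ) (hF : IsUniformExpansion n F ξ l)
    (hinv : IsAlmostInvariant p F) (hF0 : F ∅ = 0) (hpn : p ∣ n) (k : K) :
    (essentialCoords n (ξ k)).card = 1 := by
  classical
  by_contra hcard
  obtain ⟨ψ, hψ⟩ := exists_character_quarter_le_norm (hF.ne_zero k)
  let T : Set I := {i | ∃ t, IsBitClique ((essentialCoords n (ξ k)).map t.toEmbedding) ∧ ξ k t = i}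
  let χ : (I →₀ Q) →+ AddCircle (1 : ℝ) := Finsupp.liftAddHom fun i ↦ if i ∈ T then ψ else 0
  obtain ⟨m, col, hcol⟩ := hinv.exists_norm_lt hF0 χ (ε := 1 / 4) (by norm_num)
  obtain ⟨s, γ, hγ, hs⟩ := exists_orderEmbedding_mem_bitIndices_iff col fun a b ↦
    a ∈ essentialCoords n (ξ k) ∧ b ∈ essentialCoords n (ξ k)
  have hbalanced : IsBalanced p col ((Finset.range n).map s.toEmbedding) := by
    refine .of_forall_eq (γ := γ) (fun a ha ↦ ?_) (by rwa [Finset.card_map, Finset.card_range])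
    obtain ⟨i, -, rfl⟩ := Finset.mem_map.mp ha
    exact hγ i
  have hsmall := hcol _ hbalanced
  rw [hF.apply_map_range, map_sum, Finset.sum_eq_single k] at hsmall
  · have hk : ξ k s ∈ T := ⟨s, isBitClique_map hs, rfl⟩
    rw [Finsupp.liftAddHom_apply_single, if_pos hk] at hsmall
    exact hsmall.not_ge hψ
  · intro k' _ hk'
    have hnot : ξ k' s ∉ T := fun ⟨t, ht, heq⟩ ↦
      hk' (hF.injective s (hξ.eq_of_isBitClique hcard hs ht heq))
    rw [Finsupp.liftAddHom_apply_single, if_neg hnot, AddMonoidHom.zero_apply]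
  · exact fun hk ↦ absurd (Finset.mem_univ k) hk

theorem exists_isCoordinateSum (hξ : IsIndiscernible n ξ) (hF : IsUniformExpansion n F ξ l)
    (hone : ∀ k, (essentialCoords n (ξ k)).card = 1) : ∃ h own, IsCoordinateSum n F h own := by
  classical
  choose coord hcoord using fun k ↦ Finset.card_eq_one.mp (hone k)
  have hcoord_lt (k : K) : coord k < n :=
    lt_of_mem_essentialCoords (hcoord k ▸ Finset.mem_singleton_self _)
  have hfactor : Function.FactorsThrough (fun kt : K × (ℕ ↪o ℕ) ↦ kt.2 (coord kt.1))
      fun kt : K × (ℕ ↪o ℕ) ↦ ξ kt.1 kt.2 := fun kt kt' heq ↦ by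
    simpa [hcoord] using hξ.map_essentialCoords_eq heq
  let h (j x : ℕ) : I →₀ Q := if j ≤ x then
    ∑ k with coord k = j, Finsupp.single (ξ k (OrderEmbedding.addRight (x - j))) (l k) else 0
  refine ⟨h, Function.extend (fun kt : K × (ℕ ↪o ℕ) ↦ ξ kt.1 kt.2) (fun kt ↦ kt.2 (coord kt.1)) 0,
    fun s ↦ ?_, fun j x i hi ↦ ?_⟩
  · rw [hF.apply_map_range, ← Finset.sum_fiberwise_of_maps_to (t := Finset.range n)
      fun k _ ↦ Finset.mem_range.mpr (hcoord_lt k)]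
    refine Finset.sum_congr rfl fun j _ ↦ ?_
    have hj : j ≤ s j := s.strictMono.le_apply
    rw [show h j (s j) = _ from if_pos hj]
    refine Finset.sum_congr rfl fun k hk ↦ ?_
    obtain rfl := (Finset.mem_filter.mp hk).2
    rw [hξ.eq_of_eqOn_essentialCoords]
    simp [hcoord, hj]
  · by_cases hjx : j ≤ x
    · rw [show h j x = _ from if_pos hjx] at hi
      obtain ⟨k, hk, hik⟩ := Finset.mem_biUnion.mp (Finsupp.support_finsetSum hi)
      obtain rfl := (Finset.mem_filter.mp hk).2
      obtain rfl := Finset.mem_singleton.mp (Finsupp.support_single_subset hik)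
      refine (hfactor.extend_apply 0 (k, OrderEmbedding.addRight (x - coord k))).trans ?_
      simp [hjx]
    · rw [show h j x = 0 from if_neg hjx] at hi
      exact absurd hi (Finset.notMem_empty i)

end IsIndiscernible

end CoordinateSum

section Coloring

variable {α C : Type*}

theorem exists_infinite_subset_forall_eq [Finite C] {X : Set α} (hX : X.Infinite) (col : α → C) :
    ∃ Y ⊆ X, Y.Infinite ∧ ∃ γ, ∀ x ∈ Y, col x = γ := by
  have := hX.to_subtype
  obtain ⟨γ, hγ⟩ := Finite.exists_infinite_fiber fun x : X ↦ col x
  refine ⟨Subtype.val '' ((fun x : X ↦ col x) ⁻¹' {γ}), Subtype.coe_image_subset _ _,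
    (Set.infinite_coe_iff.mp hγ).image Subtype.val_injective.injOn, γ, ?_⟩
  rintro _ ⟨x, hx, rfl⟩
  exact hx

theorem exists_fin_coloring_dist_lt {E : Type*} [PseudoMetricSpace E] [CompactSpace E] {ε : ℝ}
    (hε : 0 < ε) : ∃ (k : ℕ) (r : E → Fin k), ∀ x y, r x = r y → dist x y < ε := by
  obtain ⟨t, -, hfin, ht⟩ := (isCompact_univ (X := E)).finite_cover_balls (half_pos hε)
  have hball (x : E) : ∃ c : t, dist x c < ε / 2 := by
    simpa using ht (Set.mem_univ x)
  choose r hr using hball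
  have := hfin.to_subtype
  obtain ⟨k, ⟨e⟩⟩ := Finite.exists_equiv_fin t
  refine ⟨k, e ∘ r, fun x y hxy ↦ ?_⟩
  have hy := hr y
  rw [← e.injective hxy] at hy
  linarith [hr x, dist_triangle_right x y (r x)]

theorem exists_disjoint_infinite_subsets {X : Set α} (hX : X.Infinite) :
    ∃ Y ⊆ X, ∃ Z ⊆ X, Y.Infinite ∧ Z.Infinite ∧ Disjoint Y Z := by
  obtain ⟨Y, Z, rfl, hdisj, hYZ⟩ := hX.exists_union_disjoint_cardinal_eq_of_infinite
  obtain ⟨e⟩ := Cardinal.eq.mp hYZ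
  have hiff : Y.Finite ↔ Z.Finite := e.set_finite_iff
  refine ⟨Y, Set.subset_union_left, Z, Set.subset_union_right, fun hY ↦ ?_, fun hZ ↦ ?_, hdisj⟩
  · exact hX (hY.union (hiff.mp hY))
  · exact hX ((hiff.mpr hZ).union hZ)

theorem IsBalanced.of_two_colors [DecidableEq C] {p : ℕ} {col : α → C}
    {A Y : Finset α} (hAY : A ⊆ Y) (hpA : p ∣ A.card) (hpY : p ∣ Y.card) {γ δ : C}
    (hγ : ∀ a ∈ A, col a = γ) (hδ : ∀ a ∈ Y, a ∉ A → col a = δ) : IsBalanced p col Y := by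
  classical
  have hcard : p ∣ (Y \ A).card := by
    rw [Finset.card_sdiff_of_subset hAY]
    exact Nat.dvd_sub hpY hpA
  have hdiff : IsBalanced p col (Y \ A) := .of_forall_eq (fun a ha ↦
    hδ a (Finset.mem_sdiff.mp ha).1 (Finset.mem_sdiff.mp ha).2) hcard
  have hunion := (IsBalanced.of_forall_eq hγ hpA).disjUnion hdiff Finset.disjoint_sdiff
  rwa [Finset.disjUnion_eq_union, Finset.union_sdiff_of_subset hAY] at hunion

theorem exists_orderEmbedding_forall_dist_lt [Finite C] {E : Type*} [PseudoMetricSpace E]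
    [CompactSpace E] {X Z : Set ℕ} (hX : X.Infinite) (hZ : Z.Infinite) (col : ℕ → C)
    (d : ℕ → ℕ → E) (J : Finset ℕ) {ε : ℝ} (hε : 0 < ε) :
    ∃ (s : ℕ ↪o ℕ) (y : ℕ) (γ δ : C), y ∈ X ∧
      (∀ j ∈ J, s j ∈ X ∧ col (s j) = γ ∧ dist (d j y) (d j (s j)) < ε) ∧
      ∀ j ∉ J, s j ∈ Z ∧ col (s j) = δ := by
  classical
  obtain ⟨k, r, hr⟩ := exists_fin_coloring_dist_lt (E := J → E) hε
  obtain ⟨X', hX'X, hX', γ, hγ⟩ :=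
    exists_infinite_subset_forall_eq hX fun x ↦ (col x, r fun j : J ↦ d j x)
  obtain ⟨Z', hZ'Z, hZ', δ, hδ⟩ := exists_infinite_subset_forall_eq hZ col
  obtain ⟨s, hs⟩ := exists_orderEmbedding_forall_mem (Y := fun j ↦ if j ∈ J then X' else Z')
    fun j ↦ by split_ifs <;> assumption
  obtain ⟨y, hy⟩ := hX'.nonempty
  refine ⟨s, y, γ.1, δ, hX'X hy, fun j hj ↦ ?_, fun j hj ↦ ?_⟩
  · have hsj : s j ∈ X' := by simpa [hj] using hs j
    refine ⟨hX'X hsj, congrArg Prod.fst (hγ _ hsj), ?_⟩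
    have hcol := congrArg Prod.snd ((hγ y hy).trans (hγ _ hsj).symm)
    exact (dist_le_pi_dist _ _ ⟨j, hj⟩).trans_lt (hr _ _ hcol)
  · have hsj : s j ∈ Z' := by simpa [hj] using hs j
    exact ⟨hZ'Z hsj, hδ _ hsj⟩

end Coloring

section AdditiveForm

theorem exists_character_of_own {I Q α : Type*} [AddCommGroup Q] {own : I → α} {X : Set α}
    {v : α → I →₀ Q} (hv : ∀ x ∈ X, v x ≠ 0) (hown : ∀ x, ∀ i ∈ (v x).support, own i = x) :
    ∃ χ : (I →₀ Q) →+ AddCircle (1 : ℝ), (∀ x ∈ X, 1 / 4 ≤ ‖χ (v x)‖) ∧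
      ∀ y : I →₀ Q, (∀ i ∈ y.support, own i ∉ X) → χ y = 0 := by
  classical
  choose ψ hψ using fun x (hx : x ∈ X) ↦ exists_character_quarter_le_norm (hv x hx)
  let χ : (I →₀ Q) →+ AddCircle (1 : ℝ) := Finsupp.liftAddHom fun i ↦
    if hi : own i ∈ X then (ψ (own i) hi).comp (Finsupp.singleAddHom i) else 0
  refine ⟨χ, fun x hx ↦ ?_, fun y hy ↦ Finset.sum_eq_zero fun i hi ↦ ?_⟩
  · have hχ : χ (v x) = ψ x hx (v x) := by
      conv_rhs => rw [← Finsupp.sum_single (v x), Finsupp.sum, map_sum]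
      refine Finset.sum_congr rfl fun i hi ↦ ?_
      obtain rfl := hown x i hi
      simp [hx]
    rw [hχ]
    exact hψ x hx
  · simp [hy i hi]

section ZeroSum

variable {ι M : Type*} [AddCommGroup M] {s : Finset ι} {v : ι → M} {p : ℕ}

theorem eq_of_forall_sum_eq_zero (hp : 0 < p) (hps : p < s.card)
    (hv : ∀ J ⊆ s, J.card = p → ∑ j ∈ J, v j = 0) {i j : ι} (hi : i ∈ s) (hj : j ∈ s) :
    v i = v j := by
  classical
  rcases eq_or_ne i j with rfl | hij
  · rfl
  have hle : p - 1 ≤ ((s.erase i).erase j).card := by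
    rw [Finset.card_erase_of_mem (Finset.mem_erase.mpr ⟨hij.symm, hj⟩), Finset.card_erase_of_mem hi]
    lia
  obtain ⟨J, hJ, hcard⟩ := Finset.exists_subset_card_eq hle
  have hiJ : i ∉ J := fun h ↦ by simpa using hJ h
  have hjJ : j ∉ J := fun h ↦ by simpa using hJ h
  have hJs : J ⊆ s := hJ.trans ((Finset.erase_subset _ _).trans (Finset.erase_subset _ _))
  have hsum {a : ι} (ha : a ∈ s) (haJ : a ∉ J) : v a + ∑ b ∈ J, v b = 0 := by
    rw [← Finset.sum_insert haJ]
    exact hv _ (Finset.insert_subset ha hJs) (by rw [Finset.card_insert_of_notMem haJ]; lia)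
  exact add_right_cancel ((hsum hi hiJ).trans (hsum hj hjJ).symm)

theorem smul_eq_zero_of_forall_sum_eq_zero (hp : 0 < p) (hps : p < s.card)
    (hv : ∀ J ⊆ s, J.card = p → ∑ j ∈ J, v j = 0) {i : ι} (hi : i ∈ s) : p • v i = 0 := by
  obtain ⟨J, hJ, hcard⟩ := Finset.exists_subset_card_eq hps.le
  rw [← hv J hJ hcard, ← hcard, ← Finset.sum_const]
  exact Finset.sum_congr rfl fun j hj ↦ eq_of_forall_sum_eq_zero hp hps hv hi (hJ hj)

end ZeroSum

variable {I Q : Type*} [AddCommGroup Q] {n p : ℕ} {F : Finset ℕ → I →₀ Q} {own : I → ℕ}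

namespace IsCoordinateSum

variable {h : ℕ → ℕ → I →₀ Q}

-- Otherwise some character is bounded away from zero on these sums for `x` in an infinite set `X`
-- and vanishes on all contributions from another infinite set `Z`; filling the positions in `J`
-- from `X` and the other ones from `Z` contradicts almost invariance.
theorem finite_setOf_sum_ne_zero (hF : IsCoordinateSum n F h own) (hinv : IsAlmostInvariant p F)
    (hF0 : F ∅ = 0) (hp : 0 < p) (hpn : p ∣ n) {J : Finset ℕ} (hJ : J ⊆ Finset.range n)
    (hJp : J.card = p) : {x | ∑ j ∈ J, h j x ≠ 0}.Finite := by
  classical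
  by_contra hinf
  obtain ⟨X, hX, Z, -, hXinf, hZinf, hXZ⟩ := exists_disjoint_infinite_subsets hinf
  obtain ⟨χ, hχX, hχ0⟩ := exists_character_of_own (own := own) hX fun x i hi ↦ by
    obtain ⟨j, -, hij⟩ := Finset.mem_biUnion.mp (Finsupp.support_finsetSum hi)
    exact hF.own_eq j x i hij
  obtain ⟨k, col, hcol⟩ := hinv.exists_norm_lt hF0 χ (ε := 1 / 8) (by norm_num)
  have : Fact ((0 : ℝ) < 1) := ⟨one_pos⟩
  obtain ⟨s, y, γ, δ, hy, hsJ, hsZ⟩ := exists_orderEmbedding_forall_dist_lt hXinf hZinf col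
    (fun j x ↦ χ (h j x)) J (ε := 1 / (8 * p)) (by positivity)
  have hbalanced : IsBalanced p (col ∘ s) (Finset.range n) :=
    .of_two_colors hJ hJp.symm.dvd (by rwa [Finset.card_range]) (fun j hj ↦ (hsJ j hj).2.1)
      fun j _ hj ↦ (hsZ j hj).2
  have hsmall := hcol _ (IsBalanced.map (e := s.toEmbedding) hbalanced)
  have hvanish : ∀ j ∈ Finset.range n, j ∉ J → χ (h j (s j)) = 0 := fun j _ hj ↦
    hχ0 _ fun i hi ↦ hF.own_eq j _ i hi ▸ hXZ.notMem_of_mem_right (hsZ j hj).1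
  rw [hF.apply_map_range, map_sum, ← Finset.sum_subset hJ hvanish] at hsmall
  have hclose : ‖∑ j ∈ J, χ (h j y) - ∑ j ∈ J, χ (h j (s j))‖ ≤ 1 / 8 := calc
    _ = ‖∑ j ∈ J, (χ (h j y) - χ (h j (s j)))‖ := by rw [Finset.sum_sub_distrib]
    _ ≤ ∑ j ∈ J, (1 / (8 * p) : ℝ) := norm_sum_le_of_le J fun j hj ↦ by
      rw [← dist_eq_norm]
      exact (hsJ j hj).2.2.le
    _ = 1 / 8 := by
      rw [Finset.sum_const, hJp, nsmul_eq_mul]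
      field_simp
  have hlarge := hχX y hy
  rw [map_sum] at hlarge
  linarith [norm_sub_norm_le (∑ j ∈ J, χ (h j y)) (∑ j ∈ J, χ (h j (s j)))]

theorem exists_forall_ge_eq (hF : IsCoordinateSum n F h own) (hinv : IsAlmostInvariant p F)
    (hF0 : F ∅ = 0) (hp : 0 < p) (hpn : p ∣ n) (hlt : p < n) :
    ∃ N, ∀ x, N ≤ x → (∀ j < n, h j x = h 0 x) ∧ p • h 0 x = 0 := by
  have hfin : (⋃ J ∈ (Finset.range n).powersetCard p, {x | ∑ j ∈ J, h j x ≠ 0}).Finite :=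
    Set.Finite.biUnion (Finset.finite_toSet _) fun J hJ ↦
      have hJ := Finset.mem_powersetCard.mp hJ
      hF.finite_setOf_sum_ne_zero hinv hF0 hp hpn hJ.1 hJ.2
  obtain ⟨M, hM⟩ := hfin.bddAbove
  refine ⟨M + 1, fun x hx ↦ ?_⟩
  have hzero : ∀ J ⊆ Finset.range n, J.card = p → ∑ j ∈ J, h j x = 0 := by
    intro J hJ hJp
    by_contra hne
    have hxM : x ≤ M := hM (Set.mem_biUnion (Finset.mem_powersetCard.mpr ⟨hJ, hJp⟩) hne)
    lia
  have hcard : p < (Finset.range n).card := by rwa [Finset.card_range]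
  have h0 : 0 ∈ Finset.range n := Finset.mem_range.mpr (hp.trans hlt)
  exact ⟨fun j hj ↦ eq_of_forall_sum_eq_zero hp hcard hzero (Finset.mem_range.mpr hj) h0,
    smul_eq_zero_of_forall_sum_eq_zero hp hcard hzero h0⟩

theorem apply_eq_sum (hF : IsCoordinateSum n F h own) {g : ℕ → I →₀ Q} {N : ℕ}
    (hg : ∀ x, N ≤ x → ∀ j < n, h j x = g x) {A : Finset ℕ} (hA : A.card = n)
    (hAN : ∀ x ∈ A, N ≤ x) : F A = ∑ x ∈ A, g x := by
  obtain ⟨s, hs⟩ : ∃ s : ℕ ↪o ℕ, (Finset.range n).map s.toEmbedding = A :=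
    ⟨enumeration A, hA ▸ map_enumeration A⟩
  rw [← hs] at hAN ⊢
  rw [hF.apply_map_range, Finset.sum_map]
  exact Finset.sum_congr rfl fun j hj ↦
    hg _ (hAN _ (Finset.mem_map_of_mem _ hj)) j (Finset.mem_range.mp hj)

end IsCoordinateSum

-- A balanced set `D` far away from `B` extends `B` to an `n`-element set without contributing to
-- the coordinates in which `F B` and the sum differ.
theorem IsAlmostInvariant.apply_eq_sum (hinv : IsAlmostInvariant p F) {g : ℕ → I →₀ Q} {N : ℕ}
    (hown : ∀ x, ∀ i ∈ (g x).support, own i = x)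
    (hF : ∀ A : Finset ℕ, A.card = n → (∀ x ∈ A, N ≤ x) → F A = ∑ x ∈ A, g x)
    {B : Finset ℕ} (hBn : B.card ≤ n) (hB : p ∣ n - B.card) (hBN : ∀ x ∈ B, N ≤ x) :
    F B = ∑ x ∈ B, g x := by
  classical
  by_contra hne
  let y := F B - ∑ x ∈ B, g x
  obtain ⟨ψ, hψ⟩ := exists_character_quarter_le_norm (y := y) (sub_ne_zero.mpr hne)
  let χ := ψ.comp (Finsupp.filterAddHom (· ∈ y.support))
  obtain ⟨k, col, hcol⟩ := hinv χ (1 / 4) (by norm_num) B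
  obtain ⟨Y, hY, hYinf, γ, hγ⟩ := exists_infinite_subset_forall_eq
    ((Set.Ici_infinite N).sdiff (B ∪ y.support.image own).finite_toSet) col
  obtain ⟨D, hDY, hD⟩ := hYinf.exists_subset_card_eq (n - B.card)
  have hDfar : ∀ x ∈ D, N ≤ x ∧ x ∉ B ∧ x ∉ y.support.image own := fun x hx ↦ by
    simpa [not_or] using hY (hDY hx)
  have hBD : Disjoint B D := Finset.disjoint_right.mpr fun x hx ↦ (hDfar x hx).2.1
  have hχD : χ (∑ x ∈ D, g x) = 0 := by
    rw [map_sum]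
    refine Finset.sum_eq_zero fun x hx ↦ ?_
    have hfilter : (g x).filter (· ∈ y.support) = 0 :=
      (Finsupp.filter_eq_zero_iff _ _).mpr fun i hi ↦ by_contra fun hgi ↦ (hDfar x hx).2.2 <|
        Finset.mem_image.mpr ⟨i, hi, hown x i (Finsupp.mem_support_iff.mpr hgi)⟩
    exact (congrArg ψ hfilter).trans (map_zero ψ)
  have hχy : χ y = ψ y :=
    congrArg ψ ((Finsupp.filter_eq_self_iff _ _).mpr fun i ↦ Finsupp.mem_support_iff.mpr)
  have hsmall := hcol D hBD (.of_forall_eq (fun x hx ↦ hγ x (hDY hx)) (hD ▸ hB))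
  have hsum : F (B.disjUnion D hBD) - F B = ∑ x ∈ D, g x - y := by
    rw [hF _ (by rw [Finset.card_disjUnion, hD, Nat.add_sub_cancel' hBn]) ?_, Finset.sum_disjUnion]
    · simp only [y]
      abel
    · intro x hx
      exact (Finset.mem_disjUnion.mp hx).elim (hBN x) fun hxD ↦ (hDfar x hxD).1
  rw [hsum, map_sub, hχD, zero_sub, norm_neg, hχy] at hsmall
  exact hsmall.not_ge hψ

end AdditiveForm

section Straightening

/-- On `p`-element sets, `F` is the sum of the contributions `g x` of the elements, and these are
annihilated by `p`. -/
structure IsTorsionSum {α M : Type*} [AddCommGroup M] (p : ℕ) (F : Finset α → M) (g : α → M) :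
    Prop where
  smul_eq_zero : ∀ x, p • g x = 0
  apply_eq_sum : ∀ B : Finset α, B.card = p → F B = ∑ x ∈ B, g x

variable {I K Q : Type*} [AddCommGroup Q] {n p : ℕ}

theorem IsIndiscernible.exists_isTorsionSum [Fintype K] {F : Finset ℕ → I →₀ Q}
    {ξ : K → (ℕ ↪o ℕ) → I} {l : K → Q} (hξ : IsIndiscernible (2 * p) ξ)
    (hF : IsUniformExpansion (2 * p) F ξ l) (hinv : IsAlmostInvariant p F) (hF0 : F ∅ = 0)
    (hp : 0 < p) : ∃ N g, IsTorsionSum p (fun B ↦ F (B.map (addRightEmbedding N))) g := by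
  have hp2 : p ∣ 2 * p := dvd_mul_left p 2
  obtain ⟨h, own, hsum⟩ := hξ.exists_isCoordinateSum hF
    (hξ.card_essentialCoords_eq_one hF hinv hF0 hp2)
  obtain ⟨N, hN⟩ := hsum.exists_forall_ge_eq hinv hF0 hp hp2 (by lia)
  refine ⟨N, fun x ↦ h 0 (x + N), fun x ↦ (hN _ (Nat.le_add_left N x)).2, fun B hB ↦ ?_⟩
  have happly := hinv.apply_eq_sum (hsum.own_eq 0) (n := 2 * p) (N := N)
    (B := B.map (addRightEmbedding N))
    (fun A ↦ hsum.apply_eq_sum fun x hx ↦ (hN x hx).1)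
    (by rw [Finset.card_map]; lia) (by rw [Finset.card_map, hB, two_mul, Nat.add_sub_cancel])
    (Finset.forall_mem_map.mpr fun x _ ↦ Nat.le_add_left N x)
  simpa using happly

/-- The nonzero values of `y`, listed in the order of an arbitrary enumeration of its support. -/
noncomputable def valueProfile (y : I →₀ Q) : Σ m, Fin m → Q :=
  ⟨y.support.card, fun k ↦ y (y.support.equivFin.symm k)⟩

theorem exists_eq_sum_single_of_valueProfile_eq {y : I →₀ Q} {γ : Σ m, Fin m → Q}
    (hγ : valueProfile y = γ) : ∃ ξ : Fin γ.1 → I, Function.Injective ξ ∧ (∀ k, γ.2 k ≠ 0) ∧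
      y = ∑ k, Finsupp.single (ξ k) (γ.2 k) := by
  subst hγ
  let e := y.support.equivFin
  refine ⟨fun k ↦ e.symm k, Subtype.val_injective.comp e.symm.injective,
    fun k ↦ Finsupp.mem_support_iff.mp (e.symm k).2, ?_⟩
  calc y = ∑ i : y.support, Finsupp.single (i : I) (y i) := by
        conv_lhs => rw [← Finsupp.sum_single y]
        exact (Finset.sum_coe_sort y.support fun i ↦ Finsupp.single i (y i)).symm
    _ = ∑ k, Finsupp.single (e.symm k : I) (y (e.symm k)) := (e.symm.sum_comp _).symm

theorem exists_isIndiscernible_isUniformExpansion {F : Finset ℕ → I →₀ Q} {γ : Σ m, Fin m → Q}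
    (hγ : ∀ A : Finset ℕ, A.card = n → valueProfile (F A) = γ) :
    ∃ (e : ℕ ↪ ℕ) (ξ : Fin γ.1 → (ℕ ↪o ℕ) → I), IsIndiscernible n ξ ∧
      IsUniformExpansion n (fun A ↦ F (A.map e)) ξ γ.2 := by
  have hcard (s : ℕ ↪o ℕ) : ((Finset.range n).map s.toEmbedding).card = n := by
    rw [Finset.card_map, Finset.card_range]
  choose ξ hinj hne hsum using fun A : {A : Finset ℕ // A.card = n} ↦
    exists_eq_sum_single_of_valueProfile_eq (hγ A.1 A.2)
  let ξ' (k : Fin γ.1) (s : ℕ ↪o ℕ) : I := ξ ⟨(Finset.range n).map s.toEmbedding, hcard s⟩ k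
  obtain ⟨e, he⟩ := exists_isIndiscernible_trans (n := n) (ξ := ξ') fun k s t hst ↦ by
    have hmap : (Finset.range n).map s.toEmbedding = (Finset.range n).map t.toEmbedding := by
      simp only [Finset.map_eq_image]
      exact Finset.image_congr fun i hi ↦ hst i (Finset.mem_range.mp hi)
    simp only [ξ', hmap]
  refine ⟨e.toEmbedding, _, he, hne ⟨Finset.range n, Finset.card_range n⟩, fun s ↦ hinj _,
    fun s ↦ ?_⟩
  rw [Finset.map_map]
  exact hsum ⟨_, hcard (s.trans e)⟩

theorem IsAlmostInvariant.exists_isTorsionSum_of_beth_lt [Countable Q] (hp : 0 < p) (K : Type u)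
    (hK : Cardinal.beth ((2 * p - 1 : ℕ) : Ordinal) < Cardinal.mk K) {F : Finset K → I →₀ Q}
    (hinv : IsAlmostInvariant p F) (hF0 : F ∅ = 0) :
    ∃ (w : ℕ ↪ K) (g : ℕ → I →₀ Q), IsTorsionSum p (fun B ↦ F (B.map w)) g := by
  obtain ⟨S, hS, γ, hγ⟩ :=
    exists_infinite_isHomogeneous_of_beth_lt (2 * p - 1) K hK fun A ↦ valueProfile (F A)
  rw [Nat.sub_add_cancel (by lia)] at hγ
  let w : ℕ ↪ K := (hS.natEmbedding S).trans (Function.Embedding.subtype _)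
  obtain ⟨e, ξ, hξ, hF⟩ := exists_isIndiscernible_isUniformExpansion
      (F := fun A ↦ F (A.map w)) (n := 2 * p) (γ := γ) fun A hA ↦ by
    refine hγ _ (by rwa [Finset.card_map]) fun a ha ↦ ?_
    obtain ⟨i, -, rfl⟩ := Finset.mem_map.mp ha
    exact (hS.natEmbedding S i).2
  obtain ⟨N, g, hg⟩ := hξ.exists_isTorsionSum hF ((hinv.comp_map w).comp_map e) (by simpa) hp
  refine ⟨(addRightEmbedding N).trans (e.trans w), g, hg.smul_eq_zero, fun B hB ↦ ?_⟩
  rw [← hg.apply_eq_sum B hB, Finset.map_map, Finset.map_map]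

-- The values `g x` need not lie in the range of `j`, but their differences do.
theorem IsTorsionSum.exists_of_injective {H M : Type*} [AddCommGroup H] [AddCommGroup M]
    {j : H →+ M} (hj : Function.Injective j) (hp : 0 < p) {u : Finset ℕ → H} {g : ℕ → M}
    (hg : IsTorsionSum p (fun B ↦ j (u B)) g) :
    ∃ G : ℕ → H, IsTorsionSum p (fun B ↦ u (B.map (addRightEmbedding p))) G := by
  let t := Finset.range (p - 1)
  have hinsert {x : ℕ} (hx : p - 1 ≤ x) : j (u (insert x t)) = g x + ∑ a ∈ t, g a := by
    have hxt : x ∉ t := fun h ↦ hx.not_gt (Finset.mem_range.mp h)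
    rw [← Finset.sum_insert hxt]
    refine hg.apply_eq_sum _ ?_
    rw [Finset.card_insert_of_notMem hxt, Finset.card_range, Nat.sub_add_cancel hp]
  let G (x : ℕ) : H := u (insert (x + p) t) - u (insert (p - 1) t)
  have hG (x : ℕ) : j (G x) = g (x + p) - g (p - 1) := by
    rw [map_sub, hinsert (by lia), hinsert le_rfl, add_sub_add_right_eq_sub]
  refine ⟨G, fun x ↦ hj ?_, fun B hB ↦ hj ?_⟩
  · rw [map_nsmul, hG, smul_sub, hg.smul_eq_zero, hg.smul_eq_zero, sub_zero, map_zero]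
  · rw [hg.apply_eq_sum _ (by rwa [Finset.card_map]), Finset.sum_map, map_sum]
    simp only [hG, Finset.sum_sub_distrib, Finset.sum_const, hB, hg.smul_eq_zero, sub_zero,
      addRightEmbedding_apply]

theorem exists_addMonoidHom_single_eq {α β H : Type*} [AddCommGroup H] (w : α ↪ β) {G : α → H}
    (hG : ∀ a, p • G a = 0) :
    ∃ Ψ : (β →₀ ZMod p) →+ H, ∀ a, Ψ (Finsupp.single (w a) 1) = G a := by
  let Ψ : (α →₀ ZMod p) →+ H := Finsupp.liftAddHom fun a ↦
    ZMod.lift p ⟨zmultiplesHom H (G a), by simpa using hG a⟩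
  refine ⟨Ψ.comp (Finsupp.comapDomain.addMonoidHom w.injective), fun a ↦ ?_⟩
  have hlift := ZMod.lift_coe p ⟨zmultiplesHom H (G a), by simpa using hG a⟩ 1
  simpa [Ψ] using hlift

theorem exists_eq_charVec_of_mem_basisSums {α β : Type*} {w : α ↪ β} {x : β →₀ ZMod p}
    (hx : x ∈ basisSums p (Set.range w) n) :
    ∃ B : Finset α, B.card = n ∧ charVec p (B.map w) = x := by
  obtain ⟨hcard, hone, hrange⟩ := hx
  obtain ⟨B, hB⟩ : ∃ B : Finset α, B.map w = x.support := by
    classical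
    obtain ⟨B, -, hB⟩ := Finset.subset_set_image_iff.mp (hrange.trans Set.image_univ.superset)
    exact ⟨B, by rw [Finset.map_eq_image, hB]⟩
  refine ⟨B, by rw [← hcard, ← hB, Finset.card_map], ?_⟩
  rw [hB, charVec]
  conv_rhs => rw [← Finsupp.sum_single x]
  exact Finset.sum_congr rfl fun b hb ↦ by rw [hone b hb]

theorem bohr_straightening_general_general (p : ℕ) (hp : 0 < p) (κ H : Type*) [AddCommGroup H]
    (hκ : Cardinal.beth ((2 * p - 1 : ℕ) : Ordinal) < Cardinal.mk κ) (f : (κ →₀ ZMod p) → H)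
    (hf : @Continuous _ _ (bohrTopology (κ →₀ ZMod p)) (bohrTopology H) f) :
    ∃ S : Set κ, S.Infinite ∧ ∃ (h : (κ →₀ ZMod p) →+ H) (a : H),
      ∀ x ∈ basisSums p S p, f x = h x + a := by
  obtain ⟨I, j, hj⟩ := exists_injective_finsupp_rat_prod_addCircle H
  have : Countable (AddCircle (1 : ℚ)) := QuotientAddGroup.mk_surjective.countable
  have hinv := isAlmostInvariant_of_continuous hp hf j
  obtain ⟨w, g, hg⟩ := hinv.exists_isTorsionSum_of_beth_lt hp κ hκ (by simp [charVec])
  obtain ⟨G, hG⟩ := hg.exists_of_injective hj hp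
  let v : ℕ ↪ κ := (addRightEmbedding p).trans w
  obtain ⟨Ψ, hΨ⟩ := exists_addMonoidHom_single_eq v hG.smul_eq_zero
  refine ⟨Set.range v, Set.infinite_range_of_injective v.injective, Ψ, f 0, fun x hx ↦ ?_⟩
  obtain ⟨B, hB, rfl⟩ := exists_eq_charVec_of_mem_basisSums hx
  have hsum : f (charVec p (B.map v)) - f 0 = ∑ b ∈ B, G b := by
    rw [← hG.apply_eq_sum B hB, Finset.map_map]
  rw [← sub_eq_iff_eq_add, hsum, charVec, Finset.sum_map, map_sum]
  exact Finset.sum_congr rfl fun b _ ↦ (hΨ b).symm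

end Straightening

/-- (Straightening law, general case) Let `p` be prime, `κ > ℶ_{2p-1}`,
`V_κ = ⊕_κ ℤ/pℤ` and `H` an abelian group. Every continuous `f : V_κ^# → H^#` is linear
on `[S]^p` for some infinite `S ⊆ κ`: it agrees there with `h + a` for a homomorphism
`h` on the subgroup spanned by `[S]^p` and a constant `a ∈ H`. -/
theorem bohr_straightening_general (p : ℕ) (hp : p.Prime) (κ H : Type*) [AddCommGroup H]
    (hκ : Cardinal.beth ((2 * p - 1 : ℕ) : Ordinal) < Cardinal.mk κ) :
    letI := bohrTopology (κ →₀ ZMod p)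
    letI := bohrTopology H
    ∀ f : (κ →₀ ZMod p) → H, Continuous f →
      ∃ S : Set κ, S.Infinite ∧
        ∃ (h : (AddSubgroup.closure (basisSums p S p)) →+ H) (a : H),
          ∀ (x : κ →₀ ZMod p) (hx : x ∈ basisSums p S p),
            f x = h ⟨x, AddSubgroup.subset_closure hx⟩ + a := by
  intro f hf
  obtain ⟨S, hS, h, a, hfh⟩ := bohr_straightening_general_general p hp.pos κ H hκ f hf
  exact ⟨S, hS, h.comp (AddSubgroup.subtype _), a, hfh⟩
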